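/- Let d ≥ 1, let α = (α_1,…,α_d) be a multi-index with α_j > −1/2 for each j, and let k be a positive integer. There exists a constant C > 0, depending only on α, d and k, such that for every t > 0 and every x ∈ (0,∞)^d, ∫_{(0,∞)^d} |∂^k p_t^α(x,y)/∂t^k| dy ≤ C/t^k, where ∂^k/∂t^k denotes the k-th derivative of t ↦ p_t^α(x,y). -/

import Mathlib

open MeasureTheory Real Set

noncomputable def besselI (ν z : ℝ) : ℝ :=
  ∑' m : ℕ, (z / 2) ^ (2 * (m : ℝ) + ν) / (Nat.factorial m * Real.Gamma ((m : ℝ) + ν + 1))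

/-- The positive orthant `(0,∞)^d`. -/
def posOrthant (d : ℕ) : Set (Fin d → ℝ) := Set.univ.pi fun _ => Set.Ioi 0

/-- The Poisson–Laguerre kernel `p_t^α(x,y)`. -/
noncomputable def plKernel (d : ℕ) (α : Fin d → ℝ) (t : ℝ) (x y : Fin d → ℝ) : ℝ :=
  (1 / (2 * Real.sqrt π)) *
    ∫ r in Set.Ioo (0 : ℝ) 1,
      (t * Real.exp (t ^ 2 / (4 * Real.log r)) /
          ((1 - r) ^ d * (-Real.log r) ^ ((3 : ℝ) / 2))) *
        (∏ j, (y j / x j) ^ (α j / 2) *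
            Real.exp (-((r * x j + y j) / (1 - r)) - α j * Real.log r / 2) *
            besselI (α j) (2 * Real.sqrt (r * x j * y j) / (1 - r))) / r

/-- The Poisson–Laguerre semigroup `P_t^α f`, with the convention `P_0^α f = f`. -/
noncomputable def plP (d : ℕ) (α : Fin d → ℝ) (t : ℝ)
    (f : (Fin d → ℝ) → ℝ) (x : Fin d → ℝ) : ℝ :=
  if t = 0 then f x else ∫ y in posOrthant d, plKernel d α t x y * f y

/-!
The substitution `r = exp (-(2 s ^ 2)⁻¹)` turns the Poisson–Laguerre kernel into the half-Gaussian
mean `√(2/π) ∫₀^∞ t e^{-(st)²/2} H_{r(s)}(x, y) ds` of the product `H_r` of one-dimensional Laguerre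
heat kernels. Expanding the Bessel function exhibits each factor as a mixture, over a Poisson
variable `m` of mean `rx / (1 - r)`, of the gamma densities of shape `m + ν + 1` and rate
`1 / (1 - r)`; hence `H_r(x, ·)` is a probability density. On the other hand, the `k`-th
`t`-derivative of the half-Gaussian is `t^{1-k}` times a polynomial times a Gaussian in `st`, hence
at most `M t^{1-k} / (1 + (st)²)`, whose integral in `s` is `M (π/2) t^{-k}`. Differentiating under
the integral sign and integrating in `y` first gives a constant depending on `k` only.
-/

open scoped ContDiff
open ProbabilityTheory (gammaPDFReal gammaPDFReal_nonneg)

section IteratedDerivIntegral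

variable {𝕜 E S : Type*} [RCLike 𝕜] [NormedAddCommGroup E] [NormedSpace ℝ E] [NormedSpace 𝕜 E]
  [MeasurableSpace S] {μ : Measure S} {f : 𝕜 → S → E} {U : Set 𝕜} {bound : ℕ → S → ℝ}

theorem iteratedDeriv_integral_of_dominated (hU : IsOpen U)
    (hf : ∀ᵐ s ∂μ, ContDiff 𝕜 ∞ fun u => f u s)
    (hmeas : ∀ j, ∀ u ∈ U, AEStronglyMeasurable (fun s => iteratedDeriv j (fun v => f v s) u) μ)
    (hle : ∀ j, ∀ᵐ s ∂μ, ∀ u ∈ U, ‖iteratedDeriv j (fun v => f v s) u‖ ≤ bound j s)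
    (hbound : ∀ j, Integrable (bound j) μ) (k : ℕ) {u : 𝕜} (hu : u ∈ U) :
    iteratedDeriv k (fun v => ∫ s, f v s ∂μ) u = ∫ s, iteratedDeriv k (fun v => f v s) u ∂μ := by
  induction k generalizing u with
  | zero => simp only [iteratedDeriv_zero]
  | succ k ih =>
    have hnhds := hU.mem_nhds hu
    have hint : Integrable (fun s => iteratedDeriv k (fun v => f v s) u) μ :=
      (hbound k).mono' (hmeas k u hu) ((hle k).mono fun s hs => hs u hu)
    have hderiv : ∀ᵐ s ∂μ, ∀ v ∈ U, HasDerivAt (fun w => iteratedDeriv k (fun z => f z s) w)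
        (iteratedDeriv (k + 1) (fun z => f z s) v) v := by
      filter_upwards [hf] with s hs v _
      rw [iteratedDeriv_succ]
      exact (hs.differentiable_iteratedDeriv k (mod_cast WithTop.coe_lt_top k) v).hasDerivAt
    rw [iteratedDeriv_succ, Filter.EventuallyEq.deriv_eq (Filter.mem_of_superset hnhds fun v => ih)]
    exact (hasDerivAt_integral_of_dominated_loc_of_deriv_le hnhds
      (Filter.mem_of_superset hnhds (hmeas k)) hint (hmeas (k + 1) u hu) (hle (k + 1))
      (hbound (k + 1)) hderiv).2.deriv

end IteratedDerivIntegral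

section HalfGaussian

open Polynomial

/-- The half-Gaussian `t e^{-(st)²/2}`: up to the factor `√(2/π)`, the density in `s > 0` of the
absolute value of a centred Gaussian variable of standard deviation `1/t`. -/
noncomputable def halfGaussian (s t : ℝ) : ℝ := t * exp (-((s * t) ^ 2 / 2))

theorem contDiff_halfGaussian (s : ℝ) {n : ℕ∞ω} : ContDiff ℝ n (halfGaussian s) := by
  unfold halfGaussian
  fun_prop

theorem exists_abs_eval_mul_gaussian_le (P : ℝ[X]) :
    ∃ M > 0, ∀ w, |P.eval w * exp (-(w ^ 2 / 2))| ≤ M := by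
  induction P using Polynomial.induction_on' with
  | add P Q hP hQ =>
    obtain ⟨A, hA, hPA⟩ := hP
    obtain ⟨B, hB, hQB⟩ := hQ
    refine ⟨A + B, add_pos hA hB, fun w => ?_⟩
    rw [eval_add, add_mul]
    exact (abs_add_le _ _).trans (add_le_add (hPA w) (hQB w))
  | monomial n c =>
    refine ⟨(|c| + 1) * (n.factorial * exp (1 / 2)), by positivity, fun w => ?_⟩
    have hpow : |w| ^ n ≤ n.factorial * exp (1 / 2) * exp (w ^ 2 / 2) := by
      have hfact := (div_le_iff₀' (by positivity)).1 (pow_div_factorial_le_exp _ (abs_nonneg w) n)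
      refine hfact.trans ?_
      rw [mul_assoc, ← exp_add]
      gcongr
      nlinarith [sq_nonneg (|w| - 1), sq_abs w]
    calc |(monomial n c).eval w * exp (-(w ^ 2 / 2))|
        = |c| * (|w| ^ n * exp (-(w ^ 2 / 2))) := by
          rw [eval_monomial, abs_mul, abs_mul, abs_pow, abs_of_pos (exp_pos _), mul_assoc]
      _ ≤ (|c| + 1) * (n.factorial * exp (1 / 2) * exp (w ^ 2 / 2) * exp (-(w ^ 2 / 2))) := by
          gcongr
          linarith
      _ = (|c| + 1) * (n.factorial * exp (1 / 2)) := by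
          rw [mul_assoc _ (exp _) (exp _), ← exp_add, add_neg_cancel, exp_zero, mul_one]

theorem iteratedDeriv_halfGaussian (k : ℕ) :
    ∃ P : ℝ[X], ∀ s t : ℝ, t ≠ 0 → iteratedDeriv k (halfGaussian s) t =
      t / t ^ k * (P.eval (s * t) * exp (-((s * t) ^ 2 / 2))) := by
  induction k with
  | zero => exact ⟨1, fun s t _ => by simp [halfGaussian]⟩
  | succ k ih =>
    obtain ⟨P, hP⟩ := ih
    refine ⟨C (1 - (k : ℝ)) * P + X * derivative P - X ^ 2 * P, fun s t ht => ?_⟩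
    have hpow : HasDerivAt (fun u : ℝ => u / u ^ k) ((1 - k) / t ^ k) t := by
      refine ((hasDerivAt_id t).div (hasDerivAt_pow k t) (pow_ne_zero k ht)).congr_deriv ?_
      rcases k with _ | k
      · simp
      · simp only [id, Nat.add_sub_cancel]
        field_simp
        push_cast
        ring
    have hlin : HasDerivAt (fun u => s * u) s t := by simpa using (hasDerivAt_id t).const_mul s
    have hpoly : HasDerivAt (fun u => P.eval (s * u)) ((derivative P).eval (s * t) * s) t :=
      (P.hasDerivAt (s * t)).comp t hlin
    have hexp := ((hlin.pow 2).div_const 2).neg.exp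
    rw [iteratedDeriv_succ, Filter.EventuallyEq.deriv_eq
      (Filter.mem_of_superset (isOpen_ne.mem_nhds ht) fun u hu => hP s u hu)]
    refine ((hpow.mul (hpoly.mul hexp)).congr_deriv ?_).deriv
    simp only [eval_add, eval_sub, eval_mul, eval_C, eval_X, eval_pow, pow_succ t k,
      Pi.mul_apply, Pi.neg_apply, Pi.pow_apply]
    field_simp
    ring

theorem measurable_iteratedDeriv_halfGaussian (k : ℕ) {t : ℝ} (ht : t ≠ 0) :
    Measurable fun s => iteratedDeriv k (halfGaussian s) t := by
  obtain ⟨P, hP⟩ := iteratedDeriv_halfGaussian k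
  simp only [hP _ t ht]
  fun_prop

theorem exists_abs_iteratedDeriv_halfGaussian_le (k : ℕ) :
    ∃ M > 0, ∀ s t : ℝ, 0 < t → |iteratedDeriv k (halfGaussian s) t| ≤
      M * (t / t ^ k) * (1 + (s * t) ^ 2)⁻¹ := by
  obtain ⟨P, hP⟩ := iteratedDeriv_halfGaussian k
  obtain ⟨M, hM, hle⟩ := exists_abs_eval_mul_gaussian_le (P * (1 + X ^ 2))
  refine ⟨M, hM, fun s t ht => ?_⟩
  have hpos : 0 < 1 + (s * t) ^ 2 := by positivity
  have hPM : |P.eval (s * t) * exp (-((s * t) ^ 2 / 2))| ≤ M * (1 + (s * t) ^ 2)⁻¹ := by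
    have hw := hle (s * t)
    simp only [eval_mul, eval_add, eval_one, eval_pow, eval_X] at hw
    rwa [mul_right_comm, abs_mul, abs_of_pos hpos, ← le_div_iff₀ hpos, div_eq_mul_inv] at hw
  rw [hP s t ht.ne', abs_mul, abs_of_pos (by positivity)]
  calc t / t ^ k * |P.eval (s * t) * exp (-((s * t) ^ 2 / 2))|
      ≤ t / t ^ k * (M * (1 + (s * t) ^ 2)⁻¹) := by gcongr
    _ = M * (t / t ^ k) * (1 + (s * t) ^ 2)⁻¹ := by ring

theorem exists_abs_iteratedDeriv_halfGaussian_le_of_mem_Ioo (k : ℕ) {t : ℝ} (ht : 0 < t) :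
    ∃ M, ∀ s, ∀ u ∈ Ioo (t / 2) (2 * t),
      |iteratedDeriv k (halfGaussian s) u| ≤ M * (1 + (s * t) ^ 2)⁻¹ := by
  obtain ⟨M, hM, hle⟩ := exists_abs_iteratedDeriv_halfGaussian_le k
  refine ⟨M * (2 * t / (t / 2) ^ k) * 4, fun s u ⟨htu, hut⟩ => ?_⟩
  have hu : 0 < u := (half_pos ht).trans htu
  have hinv : (1 + (s * u) ^ 2)⁻¹ ≤ 4 * (1 + (s * t) ^ 2)⁻¹ := by
    rw [← div_eq_mul_inv, le_div_iff₀ (by positivity), inv_mul_le_iff₀ (by positivity)]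
    nlinarith [mul_le_mul_of_nonneg_left (pow_le_pow_left₀ (half_pos ht).le htu.le 2) (sq_nonneg s)]
  calc _ ≤ M * (u / u ^ k) * (1 + (s * u) ^ 2)⁻¹ := hle s u hu
    _ ≤ M * (2 * t / (t / 2) ^ k) * (4 * (1 + (s * t) ^ 2)⁻¹) := by gcongr
    _ = M * (2 * t / (t / 2) ^ k) * 4 * (1 + (s * t) ^ 2)⁻¹ := by ring

end HalfGaussian

section GaussianSubordination

variable {Y : Type*} [MeasurableSpace Y] {ν : Measure Y} {φ : ℝ → Y → ℝ} {A t : ℝ}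

/-- The Poisson-type mean `∫₀^∞ t e^{-(st)²/2} φ_s ds` of a one-parameter family `φ`. The parameter
`s` is related to the heat time `τ` of the usual subordination formula by `s = (2τ)^{-1/2}`. -/
noncomputable def gaussianSubordination (φ : ℝ → Y → ℝ) (t : ℝ) (y : Y) : ℝ :=
  ∫ s in Ioi 0, halfGaussian s t * φ s y

theorem integral_Ioi_inv_one_add_mul_sq (ht : 0 < t) :
    ∫ s in Ioi (0 : ℝ), (1 + (s * t) ^ 2)⁻¹ = π / (2 * t) := by
  rw [integral_comp_mul_right_Ioi (fun w : ℝ => (1 + w ^ 2)⁻¹) 0 ht, zero_mul,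
    integral_Ioi_inv_one_add_sq, arctan_zero, sub_zero, smul_eq_mul]
  field_simp

theorem integrable_inv_one_add_mul_sq (ht : t ≠ 0) :
    Integrable fun s : ℝ => (1 + (s * t) ^ 2)⁻¹ :=
  integrable_inv_one_add_sq.comp_mul_right' ht

theorem iteratedDeriv_gaussianSubordination (hφ : Measurable (Function.uncurry φ)) (ht : 0 < t)
    {y : Y} (hy : IntegrableOn (fun s => (1 + (s * t) ^ 2)⁻¹ * φ s y) (Ioi 0)) (k : ℕ) :
    iteratedDeriv k (fun u => gaussianSubordination φ u y) t =
      ∫ s in Ioi 0, iteratedDeriv k (halfGaussian s) t * φ s y := by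
  have hφy : Measurable fun s => φ s y := hφ.comp measurable_prodMk_right
  have hmul (j : ℕ) (s u : ℝ) : iteratedDeriv j (fun v => halfGaussian s v * φ s y) u =
      iteratedDeriv j (halfGaussian s) u * φ s y :=
    iteratedDeriv_mul_const_field (halfGaussian s) (φ s y)
  choose M hM using fun j => exists_abs_iteratedDeriv_halfGaussian_le_of_mem_Ioo j ht
  simp only [gaussianSubordination, ← hmul]
  refine iteratedDeriv_integral_of_dominated (U := Ioo (t / 2) (2 * t))
    (bound := fun j s => M j * ‖(1 + (s * t) ^ 2)⁻¹ * φ s y‖) isOpen_Ioo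
    (ae_of_all _ fun s => (contDiff_halfGaussian s).mul contDiff_const) (fun j u hu => ?_)
    (fun j => ae_of_all _ fun s u hu => ?_) (fun j => hy.norm.const_mul (M j)) k
    ⟨by linarith, by linarith⟩
  · simp only [hmul]
    have hu0 : u ≠ 0 := ((half_pos ht).trans hu.1).ne'
    exact ((measurable_iteratedDeriv_halfGaussian j hu0).mul hφy).aestronglyMeasurable
  · have hpos : 0 ≤ (1 + (s * t) ^ 2)⁻¹ := by positivity
    rw [hmul, norm_mul, norm_mul, ← mul_assoc, norm_of_nonneg hpos]
    exact mul_le_mul_of_nonneg_right (hM j s u hu) (norm_nonneg _)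

theorem integral_norm_mul_le (hA : ∀ s > 0, ∫ y, ‖φ s y‖ ∂ν ≤ A) {w v : ℝ → ℝ}
    (hwv : ∀ s > 0, |w s| ≤ v s) {s : ℝ} (hs : 0 < s) : ∫ y, ‖w s * φ s y‖ ∂ν ≤ v s * A := by
  simp only [norm_mul, integral_const_mul]
  exact mul_le_mul (hwv s hs) (hA s hs) (by positivity) ((abs_nonneg _).trans (hwv s hs))

theorem integrable_prod_mul [SFinite ν] (hφ : Measurable (Function.uncurry φ))
    (hint : ∀ s > 0, Integrable (φ s) ν) (hA : ∀ s > 0, ∫ y, ‖φ s y‖ ∂ν ≤ A) {w v : ℝ → ℝ}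
    (hw : Measurable w) (hv : IntegrableOn v (Ioi 0)) (hwv : ∀ s > 0, |w s| ≤ v s) :
    Integrable (Function.uncurry fun s y => w s * φ s y) ((volume.restrict (Ioi 0)).prod ν) := by
  have hmeas : AEStronglyMeasurable (Function.uncurry fun s y => w s * φ s y)
      ((volume.restrict (Ioi 0)).prod ν) :=
    ((hw.comp measurable_fst).mul hφ).aestronglyMeasurable
  refine (integrable_prod_iff hmeas).2
    ⟨?_, (hv.mul_const A).mono' hmeas.norm.integral_prod_right' ?_⟩
  · filter_upwards [ae_restrict_mem measurableSet_Ioi] with s hs using (hint s hs).const_mul (w s)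
  · filter_upwards [ae_restrict_mem measurableSet_Ioi] with s hs
    rw [norm_of_nonneg (by positivity)]
    exact integral_norm_mul_le hA hwv hs

theorem integral_integral_norm_mul_le [SFinite ν] (hφ : Measurable (Function.uncurry φ))
    (hint : ∀ s > 0, Integrable (φ s) ν) (hA : ∀ s > 0, ∫ y, ‖φ s y‖ ∂ν ≤ A) {w v : ℝ → ℝ}
    (hw : Measurable w) (hv : IntegrableOn v (Ioi 0)) (hwv : ∀ s > 0, |w s| ≤ v s) :
    ∫ s in Ioi 0, ∫ y, ‖w s * φ s y‖ ∂ν ≤ (∫ s in Ioi 0, v s) * A := by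
  rw [← integral_mul_const]
  exact setIntegral_mono_on (integrable_prod_mul hφ hint hA hw hv hwv).integral_norm_prod_left
    (hv.mul_const A) measurableSet_Ioi fun s hs => integral_norm_mul_le hA hwv hs

theorem exists_integral_norm_iteratedDeriv_gaussianSubordination_le (k : ℕ) :
    ∃ M > 0, ∀ {Y : Type*} [MeasurableSpace Y] {ν : Measure Y} [SFinite ν] {φ : ℝ → Y → ℝ} {A : ℝ},
      Measurable (Function.uncurry φ) → (∀ s > 0, Integrable (φ s) ν) →
      (∀ s > 0, ∫ y, ‖φ s y‖ ∂ν ≤ A) → ∀ t > 0,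
        Integrable (fun y => iteratedDeriv k (fun u => gaussianSubordination φ u y) t) ν ∧
        ∫ y, ‖iteratedDeriv k (fun u => gaussianSubordination φ u y) t‖ ∂ν ≤ M * A / t ^ k := by
  obtain ⟨M, hM, hle⟩ := exists_abs_iteratedDeriv_halfGaussian_le k
  refine ⟨M * (π / 2), by positivity, fun {Y _ ν _ φ A} hφ hint hA t ht => ?_⟩
  have hcauchy := integrable_inv_one_add_mul_sq ht.ne'
  have hmajorant := (hcauchy.const_mul (M * (t / t ^ k))).integrableOn (s := Ioi 0)
  have hmeas := measurable_iteratedDeriv_halfGaussian k ht.ne'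
  have hprod := integrable_prod_mul hφ hint hA (by fun_prop) hcauchy.integrableOn
    fun s _ => (abs_of_nonneg (by positivity)).le
  have hprod' := integrable_prod_mul hφ hint hA hmeas hmajorant fun s _ => hle s t ht
  have hbound := integral_integral_norm_mul_le hφ hint hA hmeas hmajorant fun s _ => hle s t ht
  have hderiv : (fun y => ∫ s in Ioi 0, iteratedDeriv k (halfGaussian s) t * φ s y) =ᵐ[ν]
      fun y => iteratedDeriv k (fun u => gaussianSubordination φ u y) t := by
    filter_upwards [hprod.prod_left_ae] with y hy
    exact (iteratedDeriv_gaussianSubordination hφ ht hy k).symm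
  refine ⟨hprod'.integral_prod_right.congr hderiv, ?_⟩
  calc ∫ y, ‖iteratedDeriv k (fun u => gaussianSubordination φ u y) t‖ ∂ν
      = ∫ y, ‖∫ s in Ioi 0, iteratedDeriv k (halfGaussian s) t * φ s y‖ ∂ν :=
        integral_congr_ae (hderiv.symm.fun_comp norm)
    _ ≤ ∫ y, (∫ s in Ioi 0, ‖iteratedDeriv k (halfGaussian s) t * φ s y‖) ∂ν :=
        integral_mono hprod'.integral_prod_right.norm hprod'.norm.integral_prod_right
          fun y => norm_integral_le_integral_norm _
    _ = ∫ s in Ioi 0, ∫ y, ‖iteratedDeriv k (halfGaussian s) t * φ s y‖ ∂ν :=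
        (integral_integral_swap hprod'.norm).symm
    _ ≤ M * (t / t ^ k) * (π / (2 * t)) * A := by
        rwa [integral_const_mul, integral_Ioi_inv_one_add_mul_sq ht] at hbound
    _ = M * (π / 2) * A / t ^ k := by field_simp

end GaussianSubordination

section LaguerreHeatKernel

variable {ν r x y : ℝ}

theorem measurable_besselI (ν : ℝ) : Measurable (besselI ν) := by
  unfold besselI
  exact Measurable.tsum fun m => by fun_prop

theorem integral_gammaPDFReal_Ioi {a c : ℝ} (ha : 0 < a) (hc : 0 < c) :
    ∫ y in Ioi 0, gammaPDFReal a c y = 1 := by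
  have heq : ∀ y ∈ Ioi (0 : ℝ), gammaPDFReal a c y =
      c ^ a / Gamma a * (y ^ (a - 1) * exp (-(c * y))) := fun y hy => by
    rw [gammaPDFReal, if_pos (mem_Ioi.1 hy).le, mul_assoc]
  rw [setIntegral_congr_fun measurableSet_Ioi heq, integral_const_mul,
    integral_rpow_mul_exp_neg_mul_Ioi ha hc, one_div, inv_rpow hc.le]
  field_simp

/-- The heat kernel `e^{-τL}(x, y)` at `r = e^{-τ}` of the one-dimensional Laguerre operator
`L = -x ∂² - (ν + 1 - x) ∂`, given by the Hille–Hardy formula, with respect to Lebesgue measure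
in `y` rather than the invariant measure `y^ν e^{-y} dy`. -/
noncomputable def laguerreHeatKernel (ν r x y : ℝ) : ℝ :=
  (1 - r)⁻¹ * ((y / x) ^ (ν / 2) * exp (-((r * x + y) / (1 - r)) - ν * log r / 2) *
    besselI ν (2 * √(r * x * y) / (1 - r)))

theorem measurable_laguerreHeatKernel (ν x : ℝ) :
    Measurable fun p : ℝ × ℝ => laguerreHeatKernel ν p.1 x p.2 := by
  have hbessel := (measurable_besselI ν).comp
    (by fun_prop : Measurable fun p : ℝ × ℝ => 2 * √(p.1 * x * p.2) / (1 - p.1))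
  have hprefactor : Measurable fun p : ℝ × ℝ => (p.2 / x) ^ (ν / 2) *
      exp (-((p.1 * x + p.2) / (1 - p.1)) - ν * log p.1 / 2) := by fun_prop
  exact (measurable_const.sub measurable_fst).inv.mul (hprefactor.mul hbessel)

theorem besselI_term_eq_poisson_mul_gammaPDFReal (ν : ℝ) (m : ℕ) (hr : r ∈ Ioo (0 : ℝ) 1)
    (hx : 0 < x) (hy : 0 < y) :
    (1 - r)⁻¹ * ((y / x) ^ (ν / 2) * exp (-((r * x + y) / (1 - r)) - ν * log r / 2) *
      ((2 * √(r * x * y) / (1 - r) / 2) ^ (2 * (m : ℝ) + ν) /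
        (Nat.factorial m * Gamma ((m : ℝ) + ν + 1)))) =
    exp (-(r * x / (1 - r))) * (r * x / (1 - r)) ^ m / Nat.factorial m *
      gammaPDFReal (m + ν + 1) (1 - r)⁻¹ y := by
  have hr0 := hr.1
  have hq : 0 < 1 - r := sub_pos.2 hr.2
  have hlog : log (√(r * x * y) / (1 - r)) = (log r + log x + log y) / 2 - log (1 - r) := by
    rw [log_div (by positivity) hq.ne', log_sqrt (by positivity),
      log_mul (by positivity) hy.ne', log_mul hr0.ne' hx.ne']
  have hpowers : (1 - r)⁻¹ * ((y / x) ^ (ν / 2) * exp (-(ν * log r / 2)) *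
      (√(r * x * y) / (1 - r)) ^ (2 * (m : ℝ) + ν)) =
      (r * x / (1 - r)) ^ m * (1 - r)⁻¹ ^ (m + ν + 1) * y ^ (m + ν + 1 - 1) := by
    rw [← rpow_natCast, rpow_def_of_pos (by positivity), rpow_def_of_pos (by positivity),
      rpow_def_of_pos (by positivity), rpow_def_of_pos (by positivity),
      rpow_def_of_pos (by positivity), hlog, log_div hy.ne' hx.ne', log_div (by positivity) hq.ne',
      log_mul hr0.ne' hx.ne', log_inv]
    nth_rewrite 1 [← exp_log hq]
    rw [← exp_neg]
    simp only [← exp_add]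
    congr 1
    ring
  have hexp : exp (-((r * x + y) / (1 - r)) - ν * log r / 2) =
      exp (-(ν * log r / 2)) * exp (-(r * x / (1 - r))) * exp (-((1 - r)⁻¹ * y)) := by
    rw [← exp_add, ← exp_add]
    congr 1
    ring
  rw [hexp, div_right_comm (2 * _), mul_div_cancel_left₀ _ two_ne_zero, gammaPDFReal, if_pos hy.le]
  linear_combination exp (-(r * x / (1 - r))) * exp (-((1 - r)⁻¹ * y)) /
    (Nat.factorial m * Gamma (m + ν + 1)) * hpowers

theorem laguerreHeatKernel_eq_tsum (ν : ℝ) (hr : r ∈ Ioo (0 : ℝ) 1) (hx : 0 < x) (hy : 0 < y) :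
    laguerreHeatKernel ν r x y =
      ∑' m : ℕ, exp (-(r * x / (1 - r))) * (r * x / (1 - r)) ^ m / Nat.factorial m *
        gammaPDFReal (m + ν + 1) (1 - r)⁻¹ y := by
  simp only [laguerreHeatKernel, besselI, ← tsum_mul_left,
    besselI_term_eq_poisson_mul_gammaPDFReal ν _ hr hx hy]

theorem laguerreHeatKernel_nonneg (hν : -1 < ν) (hr : r ∈ Ioo (0 : ℝ) 1) (hx : 0 < x)
    (hy : 0 < y) : 0 ≤ laguerreHeatKernel ν r x y := by
  rw [laguerreHeatKernel_eq_tsum ν hr hx hy]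
  have hrate : 0 < (1 - r)⁻¹ := inv_pos.2 (sub_pos.2 hr.2)
  refine tsum_nonneg fun m => ?_
  have hshape : 0 < m + ν + 1 := by linarith [m.cast_nonneg (α := ℝ)]
  have hmean : 0 ≤ r * x / (1 - r) :=
    div_nonneg (mul_nonneg hr.1.le hx.le) (sub_nonneg.2 hr.2.le)
  exact mul_nonneg (by positivity) (gammaPDFReal_nonneg hshape hrate y)

theorem integral_laguerreHeatKernel (hν : -1 < ν) (hr : r ∈ Ioo (0 : ℝ) 1) (hx : 0 < x) :
    ∫ y in Ioi 0, laguerreHeatKernel ν r x y = 1 := by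
  have hrate : 0 < (1 - r)⁻¹ := inv_pos.2 (sub_pos.2 hr.2)
  have hshape (m : ℕ) : 0 < m + ν + 1 := by linarith [m.cast_nonneg (α := ℝ)]
  have hmass (m : ℕ) := integral_gammaPDFReal_Ioi (hshape m) hrate
  have hmean : 0 ≤ r * x / (1 - r) :=
    div_nonneg (mul_nonneg hr.1.le hx.le) (sub_nonneg.2 hr.2.le)
  set p : ℕ → ℝ := fun m => exp (-(r * x / (1 - r))) * (r * x / (1 - r)) ^ m / Nat.factorial m
  have hpoisson : HasSum p 1 := ProbabilityTheory.hasSum_one_poissonMeasure ⟨_, hmean⟩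
  have hp (m : ℕ) : 0 ≤ p m := by positivity
  have hterm (m : ℕ) : ∫ y in Ioi 0, p m * gammaPDFReal (m + ν + 1) (1 - r)⁻¹ y = p m := by
    rw [integral_const_mul, hmass, mul_one]
  have hnorm (m : ℕ) : ∫ y in Ioi 0, ‖p m * gammaPDFReal (m + ν + 1) (1 - r)⁻¹ y‖ = p m := by
    simp only [norm_of_nonneg (mul_nonneg (hp m) (gammaPDFReal_nonneg (hshape m) hrate _)), hterm]
  have hint (m : ℕ) : IntegrableOn (fun y => p m * gammaPDFReal (m + ν + 1) (1 - r)⁻¹ y) (Ioi 0) :=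
    (Integrable.of_integral_ne_zero (by simp only [hmass, ne_eq, one_ne_zero, not_false_eq_true]))
      |>.const_mul (p m)
  rw [setIntegral_congr_fun measurableSet_Ioi fun y hy => laguerreHeatKernel_eq_tsum ν hr hx hy,
    ← (hasSum_integral_of_summable_integral_norm hint
      (by simpa only [hnorm] using hpoisson.summable)).tsum_eq]
  simpa only [hterm] using hpoisson.tsum_eq

theorem integrableOn_laguerreHeatKernel (hν : -1 < ν) (hr : r ∈ Ioo (0 : ℝ) 1) (hx : 0 < x) :
    IntegrableOn (laguerreHeatKernel ν r x) (Ioi 0) :=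
  Integrable.of_integral_ne_zero ((integral_laguerreHeatKernel hν hr hx).trans_ne one_ne_zero)

end LaguerreHeatKernel

section LaguerreProdHeatKernel

variable {ι : Type*} [Fintype ι] {α x : ι → ℝ} {r : ℝ}

/-- The heat kernel at `r = e^{-τ}` of the multidimensional Laguerre operator of type `α`, the sum
of the one-dimensional operators in the separate coordinates. -/
noncomputable def laguerreProdHeatKernel (α : ι → ℝ) (r : ℝ) (x y : ι → ℝ) : ℝ :=
  ∏ j, laguerreHeatKernel (α j) r (x j) (y j)

theorem measurable_laguerreProdHeatKernel (α x : ι → ℝ) :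
    Measurable fun p : ℝ × (ι → ℝ) => laguerreProdHeatKernel α p.1 x p.2 :=
  Finset.univ.measurable_fun_prod fun j _ =>
    (measurable_laguerreHeatKernel (α j) (x j)).comp
      (measurable_fst.prodMk ((measurable_pi_apply j).comp measurable_snd))

theorem volume_restrict_pi_Ioi : (volume : Measure (ι → ℝ)).restrict (univ.pi fun _ => Ioi 0) =
    Measure.pi fun _ => volume.restrict (Ioi 0) := by
  rw [volume_pi, Measure.restrict_pi_pi]

theorem integrableOn_laguerreProdHeatKernel (hα : ∀ j, -1 < α j) (hr : r ∈ Ioo (0 : ℝ) 1)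
    (hx : ∀ j, 0 < x j) :
    IntegrableOn (laguerreProdHeatKernel α r x) (univ.pi fun _ => Ioi 0) := by
  rw [IntegrableOn, volume_restrict_pi_Ioi]
  exact Integrable.fintype_prod fun j => integrableOn_laguerreHeatKernel (hα j) hr (hx j)

theorem integral_norm_laguerreProdHeatKernel (hα : ∀ j, -1 < α j) (hr : r ∈ Ioo (0 : ℝ) 1)
    (hx : ∀ j, 0 < x j) :
    ∫ y in univ.pi fun _ => Ioi 0, ‖laguerreProdHeatKernel α r x y‖ = 1 := by
  have hnorm : ∀ y ∈ univ.pi fun _ : ι => Ioi (0 : ℝ),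
      ‖laguerreProdHeatKernel α r x y‖ = laguerreProdHeatKernel α r x y := fun y hy =>
    norm_of_nonneg (Finset.prod_nonneg fun j _ =>
      laguerreHeatKernel_nonneg (hα j) hr (hx j) (hy j (mem_univ j)))
  rw [setIntegral_congr_fun (.univ_pi fun _ => measurableSet_Ioi) hnorm, volume_restrict_pi_Ioi]
  simp only [laguerreProdHeatKernel, integral_fintype_prod_eq_prod,
    integral_laguerreHeatKernel (hα _) hr (hx _), Finset.prod_const_one]

end LaguerreProdHeatKernel

section PoissonLaguerre

theorem hasDerivAt_exp_neg_inv_two_mul_sq {s : ℝ} (hs : s ≠ 0) :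
    HasDerivAt (fun s : ℝ => exp (-(2 * s ^ 2)⁻¹)) ((s ^ 3)⁻¹ * exp (-(2 * s ^ 2)⁻¹)) s := by
  have hsq : HasDerivAt (fun s : ℝ => 2 * s ^ 2) (2 * (2 * s)) s := by
    simpa using (hasDerivAt_pow 2 s).const_mul 2
  refine (hsq.fun_inv (by positivity)).fun_neg.exp.congr_deriv ?_
  field_simp

theorem injOn_exp_neg_inv_two_mul_sq : InjOn (fun s : ℝ => exp (-(2 * s ^ 2)⁻¹)) (Ioi 0) := by
  intro s hs s' hs' h
  have hsq : s ^ 2 = s' ^ 2 := by simpa using h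
  exact (pow_left_inj₀ (mem_Ioi.1 hs).le (mem_Ioi.1 hs').le two_ne_zero).1 hsq

theorem exp_neg_inv_two_mul_sq_mem_Ioo {s : ℝ} (hs : s ≠ 0) :
    exp (-(2 * s ^ 2)⁻¹) ∈ Ioo (0 : ℝ) 1 :=
  ⟨exp_pos _, exp_lt_one_iff.2 (neg_lt_zero.2 (by positivity))⟩

theorem image_exp_neg_inv_two_mul_sq :
    (fun s : ℝ => exp (-(2 * s ^ 2)⁻¹)) '' Ioi 0 = Ioo 0 1 := by
  refine Subset.antisymm (image_subset_iff.2 fun s hs =>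
    exp_neg_inv_two_mul_sq_mem_Ioo (ne_of_gt hs)) fun r hr => ?_
  have hlog : 0 < -log r := neg_pos.2 (log_neg hr.1 hr.2)
  refine ⟨(√(2 * -log r))⁻¹, inv_pos.2 (sqrt_pos.2 (by positivity)), ?_⟩
  have hinv : (2 * (√(2 * -log r))⁻¹ ^ 2)⁻¹ = -log r := by
    rw [inv_pow, sq_sqrt (by positivity)]
    field_simp
  simp only [hinv, neg_neg, exp_log hr.1]

theorem integral_Ioo_inv_neg_log_rpow_smul {E : Type*} [NormedAddCommGroup E] [NormedSpace ℝ E]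
    (F : ℝ → E) : ∫ r in Ioo 0 1, ((-log r) ^ (3 / 2 : ℝ) * r)⁻¹ • F r =
      (2 * √2) • ∫ s in Ioi 0, F (exp (-(2 * s ^ 2)⁻¹)) := by
  rw [← image_exp_neg_inv_two_mul_sq, integral_image_eq_integral_abs_deriv_smul measurableSet_Ioi
    (fun s hs => (hasDerivAt_exp_neg_inv_two_mul_sq (ne_of_gt hs)).hasDerivWithinAt)
    injOn_exp_neg_inv_two_mul_sq, ← integral_smul]
  refine setIntegral_congr_fun measurableSet_Ioi fun s (hs : 0 < s) => ?_
  have hpow : (2 * s ^ 2) ^ (3 / 2 : ℝ) = 2 * √2 * s ^ 3 := by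
    rw [show (3 / 2 : ℝ) = 1 + 1 / 2 by norm_num, rpow_add (by positivity), rpow_one,
      ← sqrt_eq_rpow, sqrt_mul zero_le_two, sqrt_sq hs.le]
    ring
  simp only [log_exp, neg_neg, smul_smul]
  congr 1
  rw [abs_of_pos (by positivity), inv_rpow (by positivity), hpow]
  field_simp

theorem plKernel_eq_gaussianSubordination (d : ℕ) (α : Fin d → ℝ) (t : ℝ) (x y : Fin d → ℝ) :
    plKernel d α t x y = √(2 / π) *
      gaussianSubordination (fun s => laguerreProdHeatKernel α (exp (-(2 * s ^ 2)⁻¹)) x) t y := by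
  have hintegrand (r : ℝ) :
      t * exp (t ^ 2 / (4 * log r)) / ((1 - r) ^ d * (-log r) ^ (3 / 2 : ℝ)) *
        (∏ j, (y j / x j) ^ (α j / 2) * exp (-((r * x j + y j) / (1 - r)) - α j * log r / 2) *
          besselI (α j) (2 * √(r * x j * y j) / (1 - r))) / r =
      ((-log r) ^ (3 / 2 : ℝ) * r)⁻¹ •
        (t * exp (t ^ 2 / (4 * log r)) * laguerreProdHeatKernel α r x y) := by
    simp only [laguerreProdHeatKernel, laguerreHeatKernel, Finset.prod_mul_distrib,
      Finset.prod_const, Finset.card_univ, Fintype.card_fin, smul_eq_mul]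
    ring
  have hgauss (s : ℝ) : t * exp (t ^ 2 / (4 * log (exp (-(2 * s ^ 2)⁻¹)))) = halfGaussian s t := by
    rw [log_exp, halfGaussian]
    congr 2
    rw [mul_neg, div_neg, ← div_div, div_inv_eq_mul]
    ring
  have hconst : 1 / (2 * √π) * (2 * √2) = √(2 / π) := by
    rw [sqrt_div zero_le_two]
    field_simp
  simp only [plKernel, hintegrand, integral_Ioo_inv_neg_log_rpow_smul, hgauss,
    gaussianSubordination]
  rw [smul_eq_mul, ← mul_assoc, hconst]

theorem laguerre_poisson_kernel_iteratedDeriv_L1_general (k : ℕ) :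
    ∃ C > 0, ∀ (d : ℕ) (α : Fin d → ℝ), (∀ j, -1 < α j) → ∀ t > (0 : ℝ), ∀ x ∈ posOrthant d,
      IntegrableOn (fun y => iteratedDeriv k (fun u => plKernel d α u x y) t) (posOrthant d) ∧
        ∫ y in posOrthant d, |iteratedDeriv k (fun u => plKernel d α u x y) t| ≤ C / t ^ k := by
  obtain ⟨M, hM, hle⟩ := exists_integral_norm_iteratedDeriv_gaussianSubordination_le k
  refine ⟨√(2 / π) * M, by positivity, fun d α hα t ht x hx => ?_⟩
  have hmem (s : ℝ) (hs : 0 < s) := exp_neg_inv_two_mul_sq_mem_Ioo hs.ne'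
  have hpos (j : Fin d) : 0 < x j := hx j (mem_univ j)
  have hmeas : Measurable (Function.uncurry fun s =>
      laguerreProdHeatKernel α (exp (-(2 * s ^ 2)⁻¹)) x) :=
    (measurable_laguerreProdHeatKernel α x).comp
      (by fun_prop : Measurable fun p : ℝ × (Fin d → ℝ) => (exp (-(2 * p.1 ^ 2)⁻¹), p.2))
  obtain ⟨hint, hbound⟩ := hle (ν := volume.restrict (posOrthant d)) hmeas
    (fun s hs => integrableOn_laguerreProdHeatKernel hα (hmem s hs) hpos)
    (fun s hs => (integral_norm_laguerreProdHeatKernel hα (hmem s hs) hpos).le) t ht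
  simp only [plKernel_eq_gaussianSubordination, iteratedDeriv_const_mul_field, abs_mul,
    abs_of_nonneg (sqrt_nonneg _), integral_const_mul]
  refine ⟨hint.const_mul _, ?_⟩
  rw [mul_div_assoc]
  rw [mul_one] at hbound
  gcongr
  exact hbound

end PoissonLaguerre

theorem laguerre_poisson_kernel_iteratedDeriv_L1
    (d : ℕ) (hd : 1 ≤ d) (α : Fin d → ℝ) (hα : ∀ j, -(1 / 2 : ℝ) < α j)
    (k : ℕ) (hk : 0 < k) :
    ∃ C > 0, ∀ t > (0 : ℝ), ∀ x ∈ posOrthant d,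
      (∫ y in posOrthant d, |iteratedDeriv k (fun u => plKernel d α u x y) t|) ≤ C / t ^ k := by
  obtain ⟨C, hC, hle⟩ := laguerre_poisson_kernel_iteratedDeriv_L1_general k
  exact ⟨C, hC, fun t ht x hx => (hle d α (fun j => by linarith [hα j]) t ht x hx).2⟩
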